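/- arXiv:0805.0330 — 2 statements merged into one kernel-verified Lean document; each statement's English description precedes it below -/
import Mathlib

section
/- For every ATRA₁ 𝒜 with alphabet Σ, there exists an ITCA 𝒞 with alphabet Σ such that L(𝒞) = {tree(τ) : τ ∈ L^fin(𝒜)}, i.e., 𝒞 accepts exactly the finite trees obtained by erasing data from the finite data trees accepted by 𝒜. -/
/-! ## Trees and data trees -/

abbrev Node : Type := List Bool

/-- A (possibly infinite) data tree over alphabet `A`, with data from `ℕ`.
It is represented by the partial labelling functions on nonleaf nodes:
`label n = some a` iff `n` is a nonleaf node labelled `a`, and similarly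
`dlabel` gives the datum at each nonleaf node. -/
structure DataTree (A : Type) where
  label : Node → Option A
  dlabel : Node → Option ℕ
  root_nonleaf : (label []).isSome
  domain_eq : ∀ n : Node, (dlabel n).isSome ↔ (label n).isSome
  tree_cond : ∀ (n : Node) (d : Bool), (label (n ++ [d])).isSome → (label n).isSome

namespace DataTree
variable {A : Type}

def Nonleaf (τ : DataTree A) (n : Node) : Prop := (τ.label n).isSome

/-- The set of nodes: the root together with both children of every nonleaf node. -/
def Nodes (τ : DataTree A) : Set Node :=
  {n | n = [] ∨ ∃ m d, n = m ++ [d] ∧ τ.Nonleaf m}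

def Leaf (τ : DataTree A) (n : Node) : Prop := n ∈ τ.Nodes ∧ ¬ τ.Nonleaf n

def Finite (τ : DataTree A) : Prop := {n | τ.Nonleaf n}.Finite

end DataTree

/-- A (possibly infinite) tree over alphabet `A` (a data tree without data). -/
structure BTree (A : Type) where
  label : Node → Option A
  root_nonleaf : (label []).isSome
  tree_cond : ∀ (n : Node) (d : Bool), (label (n ++ [d])).isSome → (label n).isSome

namespace BTree
variable {A : Type}
def Nonleaf (t : BTree A) (n : Node) : Prop := (t.label n).isSome
def Nodes (t : BTree A) : Set Node :=
  {n | n = [] ∨ ∃ m d, n = m ++ [d] ∧ t.Nonleaf m}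
def Leaf (t : BTree A) (n : Node) : Prop := n ∈ t.Nodes ∧ ¬ t.Nonleaf n
def Finite (t : BTree A) : Prop := {n | t.Nonleaf n}.Finite
end BTree

/-- The underlying tree of a data tree (erasing the data). -/
def DataTree.toTree {A : Type} (τ : DataTree A) : BTree A :=
  ⟨τ.label, τ.root_nonleaf, τ.tree_cond⟩

/-- `τ` and `τ'` have equal `l`-prefixes: they agree on all nodes of length `< l`
(hence their restrictions to nodes of length `≤ l` coincide). -/
def EqPrefix {A : Type} (τ τ' : DataTree A) (l : ℕ) : Prop :=
  ∀ n : Node, n.length < l → τ.label n = τ'.label n ∧ τ.dlabel n = τ'.dlabel n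

open Classical in
/-- The distance between data trees: `0` if they are equal, and otherwise `1/l`
where `l` is least such that the `l`-prefixes are distinct. -/
noncomputable def treeDist {A : Type} (τ τ' : DataTree A) : ℝ :=
  if τ = τ' then 0 else ((sInf {l : ℕ | ¬ EqPrefix τ τ' l} : ℕ) : ℝ)⁻¹

/-! ## Forward alternating tree 1-register automata (ATRA₁) -/

/-- Positive Boolean formulae over `Q`: atoms `q(d, ↓)` / `q(d, ¬↓)` are
`atom q d true` / `atom q d false`, where `d : Bool` is the direction. -/
inductive PosBool (Q : Type) : Type
  | atom : Q → Bool → Bool → PosBool Q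
  | tt : PosBool Q
  | ff : PosBool Q
  | and : PosBool Q → PosBool Q → PosBool Q
  | or : PosBool Q → PosBool Q → PosBool Q

/-- Satisfaction of a positive Boolean formula by a quadruple
`R d u` of subsets of `Q` (`d` = direction, `u = true` means register update `↓`). -/
def PosBool.Sat {Q : Type} (R : Bool → Bool → Set Q) : PosBool Q → Prop
  | .atom q d u => q ∈ R d u
  | .tt => True
  | .ff => False
  | .and φ ψ => φ.Sat R ∧ ψ.Sat R
  | .or φ ψ => φ.Sat R ∨ ψ.Sat R

/-- The dual of a positive Boolean formula: swaps `⊤`/`⊥` and `∧`/`∨`. -/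
def PosBool.dual {Q : Type} : PosBool Q → PosBool Q
  | .atom q d u => .atom q d u
  | .tt => .ff
  | .ff => .tt
  | .and φ ψ => .or φ.dual ψ.dual
  | .or φ ψ => .and φ.dual ψ.dual

def PosBool.map {Q Q' : Type} (f : Q → Q') : PosBool Q → PosBool Q'
  | .atom q d u => .atom (f q) d u
  | .tt => .tt
  | .ff => .ff
  | .and φ ψ => .and (φ.map f) (ψ.map f)
  | .or φ ψ => .or (φ.map f) (ψ.map f)

/-- A forward alternating tree 1-register automaton. -/
structure ATRA (A : Type) where
  Q : Type
  fin : Finite Q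
  qI : Q
  F : Set Q
  δ : Q → A → Bool → PosBool Q

namespace ATRA
variable {A : Type}

/-- The transition relation between configurations (finite sets of threads),
relative to a letter `a` and a datum `E`. -/
def Trans (M : ATRA A) (a : A) (E : ℕ) (G H0 H1 : Set (M.Q × ℕ)) : Prop :=
  ∀ q D, (q, D) ∈ G →
    ∃ R : Bool → Bool → Set M.Q,
      (M.δ q a (decide (D = E))).Sat R ∧
      ∀ d : Bool,
        (∀ r ∈ R d true, (r, E) ∈ (if d then H1 else H0)) ∧
        (∀ r ∈ R d false, (r, D) ∈ (if d then H1 else H0))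

/-- A run of `M` on a data tree `τ`. -/
structure Run (M : ATRA A) (τ : DataTree A) where
  G : Node → Set (M.Q × ℕ)
  finite : ∀ n : Node, (G n).Finite
  support : ∀ n : Node, n ∉ τ.Nodes → G n = ∅
  init : ∃ D : ℕ, τ.dlabel [] = some D ∧ (M.qI, D) ∈ G []
  step : ∀ (n : Node) (a : A) (D : ℕ), τ.label n = some a → τ.dlabel n = some D →
    M.Trans a D (G n) (G (n ++ [false])) (G (n ++ [true]))

def Run.Final {M : ATRA A} {τ : DataTree A} (ρ : M.Run τ) : Prop :=
  ∀ n, τ.Leaf n → ∀ q D, (q, D) ∈ ρ.G n → q ∈ M.F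

def Run.FiniteRun {M : ATRA A} {τ : DataTree A} (ρ : M.Run τ) : Prop :=
  ∃ l : ℕ, ∀ n : Node, l ≤ n.length → ρ.G n = ∅

/-- The language of `M` over finite data trees. -/
def Lfin (M : ATRA A) : Set (DataTree A) :=
  {τ | τ.Finite ∧ ∃ ρ : M.Run τ, ρ.Final}

/-- The safety language of `M`: data trees on which `M` has a final run. -/
def Lsaf (M : ATRA A) : Set (DataTree A) :=
  {τ | ∃ ρ : M.Run τ, ρ.Final}

/-- The co-safety language of `M`: data trees on which `M` has a final finite run. -/
def Lcos (M : ATRA A) : Set (DataTree A) :=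
  {τ | ∃ ρ : M.Run τ, ρ.Final ∧ ρ.FiniteRun}

/-- The dual automaton: final states complemented, transition formulae dualised. -/
def dual (M : ATRA A) : ATRA A :=
  ⟨M.Q, M.fin, M.qI, M.Fᶜ, fun q a b => (M.δ q a b).dual⟩

end ATRA

/-! ## Counters with incrementing errors -/

/-- A counter valuation on `k` counters. -/
abbrev Val (k : ℕ) : Type := Fin k → ℕ

/-- Pointwise order on counter valuations. -/
def ValLE {k : ℕ} (v w : Val k) : Prop := ∀ c, v c ≤ w c

/-- Instructions over `k` counters: increment, decrement, zero-test. -/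
inductive Instr (k : ℕ) : Type
  | inc : Fin k → Instr k
  | dec : Fin k → Instr k
  | ifz : Fin k → Instr k

/-- Error-free steps. -/
def StepExact {k : ℕ} : Instr k → Val k → Val k → Prop
  | .inc c, v, v' => v' = Function.update v c (v c + 1)
  | .dec c, v, v' => 0 < v c ∧ v' = Function.update v c (v c - 1)
  | .ifz c, v, v' => v c = 0 ∧ v' = v

/-- Steps with incrementing errors. -/
def StepErr {k : ℕ} (l : Instr k) (v v' : Val k) : Prop :=
  ∃ vs vs', ValLE v vs ∧ StepExact l vs vs' ∧ ValLE vs' v'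

/-- Lazy steps: either error-free, or a decrement of `0` erroneously yields `0`. -/
def StepLazy {k : ℕ} (l : Instr k) (v v' : Val k) : Prop :=
  StepExact l v v' ∨ ∃ c, l = Instr.dec c ∧ v c = 0 ∧ v' = v

/-! ## Incrementing tree counter automata (ITCA) -/

/-- A forward incrementing tree counter automaton with ε-transitions. -/
structure ITCA (A : Type) where
  Q : Type
  fin : Finite Q
  qI : Q
  F : Set Q
  k : ℕ
  δ : Set (Q × A × Instr k × Q × Q)
  δε : Set (Q × Instr k × Q)

namespace ITCA
variable {A : Type}

/-- A run of `C` on a finite tree: a block (nonempty sequence of configurations,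
consecutive ones related by ε-transitions with incrementing errors) at each node. -/
structure Run (C : ITCA A) (t : BTree A) where
  B : Node → List (C.Q × Val C.k)
  nonempty : ∀ n ∈ t.Nodes, B n ≠ []
  block : ∀ n ∈ t.Nodes,
    List.Chain' (fun x y => ∃ l, (x.1, l, y.1) ∈ C.δε ∧ StepErr l x.2 y.2) (B n)
  init : (B []).head? = some (C.qI, fun _ => 0)
  step : ∀ (n : Node) (a : A), t.label n = some a →
    ∃ q v l r0 r1 w0 w1,
      (B n).getLast? = some (q, v) ∧
      (q, a, l, r0, r1) ∈ C.δ ∧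
      StepErr l v w0 ∧ StepErr l v w1 ∧
      (B (n ++ [false])).head? = some (r0, w0) ∧
      (B (n ++ [true])).head? = some (r1, w1)

def Run.Accepting {C : ITCA A} {t : BTree A} (ρ : C.Run t) : Prop :=
  ∀ n, t.Leaf n → ∀ q v, (ρ.B n).getLast? = some (q, v) → q ∈ C.F

/-- The language of `C`: finite trees on which `C` has an accepting run. -/
def Lang (C : ITCA A) : Set (BTree A) :=
  {t | t.Finite ∧ ∃ ρ : C.Run t, ρ.Accepting}

/-- The transition relation between levels (finite sets of configurations):
each non-final configuration is replaced by the configuration(s) some firable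
transition yields lazily, and final configurations are removed. -/
def LevelStep (C : ITCA A) (G G' : Set (C.Q × Val C.k)) : Prop :=
  ∃ f : C.Q × Val C.k → Set (C.Q × Val C.k),
    (∀ x ∈ G, x.1 ∉ C.F →
      (∃ a l r0 r1 w0 w1, (x.1, a, l, r0, r1) ∈ C.δ ∧
        StepLazy l x.2 w0 ∧ StepLazy l x.2 w1 ∧ f x = {(r0, w0), (r1, w1)}) ∨
      (∃ l r w, (x.1, l, r) ∈ C.δε ∧ StepLazy l x.2 w ∧ f x = {(r, w)})) ∧
    G' = ⋃ x ∈ {y ∈ G | y.1 ∉ C.F}, f x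

end ITCA

/-- The quasi-order on levels: each configuration of `G` is dominated
(same state, pointwise smaller-or-equal valuation) by some configuration of `H`. -/
def LevelLE {Q : Type} {k : ℕ} (G H : Set (Q × Val k)) : Prop :=
  ∀ x ∈ G, ∃ y ∈ H, x.1 = y.1 ∧ ValLE x.2 y.2

namespace AtraItca

open Classical

/-! ### Counter steps -/

theorem stepErr_dec {k : ℕ} {c : Fin k} {v w : Val k} :
    StepErr (Instr.dec c) v w ↔ v c ≤ w c + 1 ∧ ∀ c', c' ≠ c → v c' ≤ w c' := by
  constructor
  · rintro ⟨vs, vs', h1, ⟨h2, rfl⟩, h3⟩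
    refine ⟨?_, fun c' hc => ?_⟩
    · have := h1 c; have := h3 c; simp at this; omega
    · have := h1 c'; have := h3 c'; simp [hc] at this; omega
  · rintro ⟨h1, h2⟩
    refine ⟨Function.update w c (w c + 1), w, fun c' => ?_, ⟨by simp, by simp⟩, fun _ => le_rfl⟩
    by_cases hc : c' = c
    · subst hc; simpa using h1
    · simpa [hc] using h2 c' hc

theorem stepErr_inc {k : ℕ} {c : Fin k} {v w : Val k} :
    StepErr (Instr.inc c) v w ↔ v c + 1 ≤ w c ∧ ∀ c', v c' ≤ w c' := by
  constructor
  · rintro ⟨vs, vs', h1, rfl, h3⟩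
    have h4 : vs c + 1 ≤ w c := by have := h3 c; simpa using this
    refine ⟨?_, fun c' => ?_⟩
    · have := h1 c; omega
    · by_cases hc : c' = c
      · subst hc; have := h1 c'; omega
      · have := h1 c'; have := h3 c'; simp [hc] at this; omega
  · rintro ⟨h1, h2⟩
    refine ⟨v, _, fun _ => le_rfl, rfl, fun c' => ?_⟩
    by_cases hc : c' = c
    · subst hc; simpa using h1
    · simpa [hc] using h2 c'

theorem stepErr_ifz {k : ℕ} {c : Fin k} {v w : Val k} :
    StepErr (Instr.ifz c) v w ↔ v c = 0 ∧ ∀ c', v c' ≤ w c' := by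
  constructor
  · rintro ⟨vs, vs', h1, ⟨h2, rfl⟩, h3⟩
    refine ⟨?_, fun c' => (h1 c').trans (h3 c')⟩
    have := h1 c; omega
  · rintro ⟨h1, h2⟩
    exact ⟨v, v, fun _ => le_rfl, ⟨h1, rfl⟩, h2⟩

/-! ### Counting -/

/-- Number of data in `X` whose profile is `T`. -/
noncomputable def Cnt {W : Type} (X : Finset ℕ) (g : ℕ → W) (T : W) : ℕ :=
  ∑ D ∈ X, if g D = T then 1 else 0

theorem cnt_insert {W : Type} {X : Finset ℕ} {D : ℕ} (h : D ∉ X) (g : ℕ → W) (T : W) :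
    Cnt (insert D X) g T = (if g D = T then 1 else 0) + Cnt X g T := by
  simp only [Cnt, Finset.sum_insert h]

theorem cnt_erase {W : Type} {X : Finset ℕ} {D : ℕ} (h : D ∈ X) (g : ℕ → W) (T : W) :
    Cnt X g T = (if g D = T then 1 else 0) + Cnt (X.erase D) g T := by
  rw [← cnt_insert (Finset.notMem_erase D X), Finset.insert_erase h]

theorem cnt_congr {W : Type} {X : Finset ℕ} {g h : ℕ → W} (H : ∀ D ∈ X, g D = h D) (T : W) :
    Cnt X g T = Cnt X h T := by
  unfold Cnt
  exact Finset.sum_congr rfl fun D hD => by rw [H D hD]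

theorem cnt_mono {W : Type} {X Y : Finset ℕ} (g : ℕ → W) (H : X ⊆ Y) (T : W) :
    Cnt X g T ≤ Cnt Y g T := by
  unfold Cnt
  exact Finset.sum_le_sum_of_subset H

theorem cnt_eq_zero {W : Type} {X : Finset ℕ} {g : ℕ → W} {T : W} (H : ∀ D ∈ X, g D ≠ T) :
    Cnt X g T = 0 := by
  unfold Cnt
  exact Finset.sum_eq_zero fun D hD => by rw [if_neg (H D hD)]

theorem ne_of_cnt_eq_zero {W : Type} {X : Finset ℕ} {g : ℕ → W} {T : W} (H : Cnt X g T = 0) :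
    ∀ D ∈ X, g D ≠ T := by
  intro D hD h
  have := cnt_erase hD g T
  rw [if_pos h] at this
  omega

@[simp] theorem cnt_empty {W : Type} (g : ℕ → W) (T : W) : Cnt ∅ g T = 0 := by simp [Cnt]

/-! ### The automaton -/

/-- Pairs of sets of states, one for each direction. -/
abbrev Prof (Q : Type) : Type := Bool → Set Q

/-- Control states: `start b d` (current bank `b`, side `d`), `proc` (main loop),
`mid` (between the decrement and the increment of a move). -/
inductive St (A Q : Type) : Type
  | init : St A Q
  | start : Bool → Bool → St A Q
  | proc : Bool → Bool → Option A → Prof Q → Set (Prof Q) → St A Q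
  | mid : Bool → Bool → Option A → Prof Q → Set (Prof Q) → Prof Q → St A Q

def St.code {A Q : Type} : St A Q → Option (Bool × Bool) ⊕
    (Bool × Bool × Option A × Prof Q × Set (Prof Q) × Option (Prof Q))
  | .init => .inl none
  | .start b d => .inl (some (b, d))
  | .proc b d a U Z => .inr (b, d, a, U, Z, none)
  | .mid b d a U Z T => .inr (b, d, a, U, Z, some T)

theorem St.finite {A Q : Type} [Finite A] [Finite Q] : Finite (St A Q) := by
  apply Finite.of_injective (St.code (A := A) (Q := Q))
  intro x y h
  cases x <;> cases y <;> simp_all [St.code]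

variable {A : Type} (M : ATRA A)

/-- Admissible move of a datum whose current threads are `S`, to the profile `T`, where
`U` is the profile of the current datum; `none` stands for a leaf. -/
def Ok (a : Option A) (U : Prof M.Q) (same : Bool) (S : Set M.Q) (T : Prof M.Q) : Prop :=
  match a with
  | none => S ⊆ M.F
  | some a => ∀ q ∈ S, ∃ R : Bool → Bool → Set M.Q, (M.δ q a same).Sat R ∧
      ∀ d : Bool, R d true ⊆ U d ∧ R d false ⊆ T d

noncomputable abbrev NC : ℕ := Nat.card (Bool × Prof M.Q)

noncomputable def e : (Bool × Prof M.Q) ≃ Fin (NC M) :=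
  haveI := M.fin
  Finite.equivFin _

inductive Eps : St A M.Q → Instr (NC M) → St A M.Q → Prop
  | init (a U) : Ok M a U true {M.qI} U →
      Eps .init (.dec (e M (false, fun _ => {M.qI}))) (.proc false false a U ∅)
  | start (b d a U T) : Ok M a U true (T d) U →
      Eps (.start b d) (.dec (e M (b, T))) (.proc b d a U ∅)
  | dec (b d a U Z S T) : Ok M a U false (S d) T →
      Eps (.proc b d a U Z) (.dec (e M (b, S))) (.mid b d a U Z T)
  | inc (b d a U Z T) : Eps (.mid b d a U Z T) (.inc (e M (!b, T))) (.proc b d a U Z)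
  | ifz (b d a U Z S) : Eps (.proc b d a U Z) (.ifz (e M (b, S))) (.proc b d a U (insert S Z))

inductive Br : St A M.Q → A → Instr (NC M) → St A M.Q → St A M.Q → Prop
  | mk (b d a U) : Br (.proc b d (some a) U Set.univ) a (.inc (e M (!b, U)))
      (.start (!b) false) (.start (!b) true)

/-- The incrementing tree counter automaton simulating `M`. -/
noncomputable abbrev aut [Finite A] : ITCA A where
  Q := St A M.Q
  fin := haveI := M.fin; St.finite
  qI := .init
  F := {q | ∃ b d U, q = .proc b d none U Set.univ}
  k := NC M
  δ := {x | Br M x.1 x.2.1 x.2.2.1 x.2.2.2.1 x.2.2.2.2}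
  δε := {x | Eps M x.1 x.2.1 x.2.2}

/-- One ε-step. -/
def Step (x y : St A M.Q × Val (NC M)) : Prop :=
  ∃ l, Eps M x.1 l y.1 ∧ StepErr l x.2 y.2

/-! ### Soundness of blocks -/

def PInv (root : Prop) (b d : Bool) (X : Finset ℕ) (g : ℕ → Prof M.Q) (a : Option A)
    (U : Prof M.Q) (Z : Set (Prof M.Q)) (v : Val (NC M)) (T0 : Option (Prof M.Q)) : Prop :=
  ∃ (E : ℕ) (P : Finset ℕ) (T : ℕ → Prof M.Q), (root → E = 0) ∧
    (E ∈ X → Ok M a U true (g E d) U) ∧ P ⊆ X.erase E ∧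
    (∀ D ∈ X.erase E, D ∉ P → Ok M a U false (g D d) (T D)) ∧
    (∀ S, Cnt P g S ≤ v (e M (b, S))) ∧
    (∀ S, Cnt (X.erase E \ P) T S ≤ v (e M (!b, S)) + if T0 = some S then 1 else 0) ∧
    ∀ D ∈ P, g D ∉ Z

def Inv (root : Prop) (b d : Bool) (X : Finset ℕ) (g : ℕ → Prof M.Q) :
    St A M.Q → Val (NC M) → Prop
  | .init, _ => root ∧ b = false ∧ d = false ∧ X = {0} ∧ g 0 = fun _ => {M.qI}
  | .start b' d', v => ¬ root ∧ b' = b ∧ d' = d ∧ ∀ S, Cnt X g S ≤ v (e M (b, S))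
  | .proc b' d' a U Z, v => b' = b ∧ d' = d ∧ PInv M root b d X g a U Z v none
  | .mid b' d' a U Z T, v => b' = b ∧ d' = d ∧ PInv M root b d X g a U Z v (some T)

variable {M}

theorem e_ne {b : Bool} {S T : Prof M.Q} : e M (!b, S) ≠ e M (b, T) := by
  intro h
  have := (e M).injective h
  simp at this

theorem e_ne' {b : Bool} {S T : Prof M.Q} (h : S ≠ T) : e M (b, S) ≠ e M (b, T) := by
  intro h'
  have := (e M).injective h'
  simp at this
  exact h this

theorem inv_step {root : Prop} {b d : Bool} {X : Finset ℕ} {g : ℕ → Prof M.Q}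
    {x y : St A M.Q × Val (NC M)} (hx : Inv M root b d X g x.1 x.2) (h : Step M x y) :
    Inv M root b d X g y.1 y.2 := by
  obtain ⟨x, v⟩ := x
  obtain ⟨y, w⟩ := y
  obtain ⟨l, h1, h2⟩ := h
  simp only at h1 h2 hx ⊢
  cases h1 with
  | init a U hok =>
    obtain ⟨hr, rfl, rfl, rfl, hg⟩ := hx
    refine ⟨rfl, rfl, 0, ∅, g, fun _ => rfl, ?_, by simp, by simp, by simp, by simp, by simp⟩
    intro _
    rw [hg]
    exact hok
  | start b' d' a U T hok =>
    obtain ⟨hr, rfl, rfl, hc⟩ := hx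
    rw [stepErr_dec] at h2
    refine ⟨rfl, rfl, ?_⟩
    by_cases hE : ∃ E ∈ X, g E = T
    · obtain ⟨E, hEX, rfl⟩ := hE
      refine ⟨E, X.erase E, g, fun h => absurd h hr, fun _ => hok, subset_rfl,
        fun D h h' => absurd h h', fun S => ?_, by simp, by simp⟩
      have h3 := hc S
      rw [cnt_erase hEX] at h3
      by_cases hS : g E = S
      · subst hS
        rw [if_pos rfl] at h3
        omega
      · have := h2.2 _ (e_ne' (b := b') (Ne.symm hS))
        omega
    · push Not at hE
      obtain ⟨E, hEX⟩ := Infinite.exists_notMem_finset X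
      refine ⟨E, X, g, fun h => absurd h hr, fun h => absurd h hEX, ?_,
        fun D h h' => absurd (Finset.mem_of_mem_erase h) h', fun S => ?_, ?_, by simp⟩
      · rw [Finset.erase_eq_of_notMem hEX]
      · by_cases hS : S = T
        · subst hS
          rw [cnt_eq_zero hE]; omega
        · exact (hc S).trans (h2.2 _ (e_ne' hS))
      · simp [Finset.erase_eq_of_notMem hEX]
  | dec b' d' a U Z S T hok =>
    obtain ⟨rfl, rfl, E, P, H, hr, hE, hP, hD, hc, hc', hZ⟩ := hx
    rw [stepErr_dec] at h2
    refine ⟨rfl, rfl, ?_⟩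
    by_cases hS : ∃ D ∈ P, g D = S
    · obtain ⟨D, hDP, rfl⟩ := hS
      refine ⟨E, P.erase D, Function.update H D T, hr, hE, (Finset.erase_subset _ _).trans hP,
        ?_, ?_, ?_, fun D' hD' => hZ D' (Finset.mem_of_mem_erase hD')⟩
      · intro D' hD' hn
        by_cases h : D' = D
        · subst h; simpa using hok
        · rw [Function.update_of_ne h]
          exact hD D' hD' fun h' => hn (Finset.mem_erase.2 ⟨h, h'⟩)
      · intro S
        have h3 := hc S
        rw [cnt_erase hDP] at h3
        by_cases hS : g D = S
        · subst hS
          rw [if_pos rfl] at h3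
          omega
        · have := h2.2 _ (e_ne' (b := b') (Ne.symm hS))
          omega
      · intro S
        have h4 : X.erase E \ P.erase D = insert D (X.erase E \ P) := by
          ext D'
          have := hP hDP
          simp only [Finset.mem_sdiff, Finset.mem_erase, Finset.mem_insert] at this ⊢
          by_cases h : D' = D
          · subst h; simp [this]
          · simp [h]
        rw [h4, cnt_insert (by simp [hDP])]
        have h5 : Cnt (X.erase E \ P) (Function.update H D T) S = Cnt (X.erase E \ P) H S := by
          apply cnt_congr
          intro D' hD'
          apply Function.update_of_ne
          rintro rfl
          exact (Finset.mem_sdiff.1 hD').2 hDP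
        have h6 := hc' S
        have h7 := h2.2 (e M (!b', S)) e_ne
        simp only [Function.update_self, Option.some.injEq, reduceCtorEq, if_false] at h6 ⊢
        omega
    · push Not at hS
      refine ⟨E, P, H, hr, hE, hP, hD, ?_, ?_, hZ⟩
      · intro S'
        by_cases hS' : S' = S
        · subst hS'
          rw [cnt_eq_zero hS]; omega
        · exact (hc S').trans (h2.2 _ (e_ne' hS'))
      · intro S'
        have h6 := hc' S'
        have h7 := h2.2 (e M (!b', S')) e_ne
        simp only [reduceCtorEq, if_false] at h6
        omega
  | inc b' d' a U Z T =>
    obtain ⟨rfl, rfl, E, P, H, hr, hE, hP, hD, hc, hc', hZ⟩ := hx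
    rw [stepErr_inc] at h2
    refine ⟨rfl, rfl, E, P, H, hr, hE, hP, hD, fun S => (hc S).trans (h2.2 _), fun S => ?_, hZ⟩
    have h6 := hc' S
    have h7 := h2.2 (e M (!b', S))
    by_cases hS : T = S
    · subst hS
      simp only [if_true] at h6
      simp only [reduceCtorEq, if_false]
      omega
    · simp only [Option.some.injEq, hS, if_false] at h6
      simp only [reduceCtorEq, if_false]
      omega
  | ifz b' d' a U Z S =>
    obtain ⟨rfl, rfl, E, P, H, hr, hE, hP, hD, hc, hc', hZ⟩ := hx
    rw [stepErr_ifz] at h2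
    refine ⟨rfl, rfl, E, P, H, hr, hE, hP, hD, fun S => (hc S).trans (h2.2 _),
      fun S => (hc' S).trans (Nat.add_le_add_right (h2.2 _) _), ?_⟩
    intro D hD h
    rcases h with h | h
    · exact ne_of_cnt_eq_zero (T := S) (Nat.le_zero.1 ((hc S).trans h2.1.le)) D hD h
    · exact hZ D hD h

theorem inv_steps {root : Prop} {b d : Bool} {X : Finset ℕ} {g : ℕ → Prof M.Q}
    {x y : St A M.Q × Val (NC M)} (hx : Inv M root b d X g x.1 x.2)
    (h : Relation.ReflTransGen (Step M) x y) : Inv M root b d X g y.1 y.2 := by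
  induction h with
  | refl => exact hx
  | tail _ h ih => exact inv_step ih h

theorem inv_final {root : Prop} {b d b' d' : Bool} {X : Finset ℕ} {g : ℕ → Prof M.Q}
    {a : Option A} {U : Prof M.Q} {v : Val (NC M)}
    (h : Inv M root b d X g (.proc b' d' a U Set.univ) v) :
    b' = b ∧ d' = d ∧ ∃ (E : ℕ) (T : ℕ → Prof M.Q), (root → E = 0) ∧
    (E ∈ X → Ok M a U true (g E d) U) ∧
    (∀ D ∈ X, D ≠ E → Ok M a U false (g D d) (T D)) ∧
    (∀ S, Cnt (X.erase E) T S ≤ v (e M (!b, S))) := by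
  obtain ⟨rfl, rfl, E, P, T, hr, hE, hP, hD, hc, hc', hZ⟩ := h
  have hP0 : P = ∅ := Finset.eq_empty_of_forall_notMem fun D hD => hZ D hD trivial
  subst hP0
  refine ⟨rfl, rfl, E, T, hr, hE, fun D hDX hDE => hD D (by simp [hDX, hDE]) (by simp), ?_⟩
  simpa using hc'

/-! ### Completeness of blocks -/

theorem ztests [Finite M.Q] (b d : Bool) (a : Option A) (U : Prof M.Q) (v : Val (NC M))
    (hv : ∀ S, v (e M (b, S)) = 0) :
    Relation.ReflTransGen (Step M) (.proc b d a U ∅, v) (.proc b d a U Set.univ, v) := by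
  have key : ∀ Z : Set (Prof M.Q), Z.Finite →
      Relation.ReflTransGen (Step M) (.proc b d a U ∅, v) (.proc b d a U Z, v) := by
    intro Z hZ
    induction Z, hZ using Set.Finite.induction_on with
    | empty => exact .refl
    | insert _ _ ih =>
      exact ih.tail ⟨_, Eps.ifz b d a U _ _, stepErr_ifz.2 ⟨hv _, fun _ => le_rfl⟩⟩
  exact key _ Set.finite_univ

/-- Valuations from functions. -/
noncomputable def V (f : Bool × Prof M.Q → ℕ) : Val (NC M) := fun c => f ((e M).symm c)

@[simp] theorem V_e (f : Bool × Prof M.Q → ℕ) (c) : V f (e M c) = f c := by simp [V]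

theorem forall_fin {p : Fin (NC M) → Prop} : (∀ c, p c) ↔ ∀ c, p (e M c) :=
  ⟨fun h c => h _, fun h c => by simpa using h ((e M).symm c)⟩

noncomputable def fv (b : Bool) (P R : Finset ℕ) (g h : ℕ → Prof M.Q) : Val (NC M) :=
  V fun c => if c.1 = b then Cnt P g c.2 else Cnt R h c.2

theorem moves {b d : Bool} {a : Option A} {U : Prof M.Q} {Y : Finset ℕ} {g h : ℕ → Prof M.Q}
    (hok : ∀ D ∈ Y, Ok M a U false (g D d) (h D)) (P : Finset ℕ) : P ⊆ Y →
    Relation.ReflTransGen (Step M) (.proc b d a U ∅, fv b P (Y \ P) g h)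
      (.proc b d a U ∅, fv b ∅ Y g h) := by
  induction P using Finset.induction_on with
  | empty => intro _; rw [Finset.sdiff_empty]
  | insert D P hDP ih =>
    intro hY
    have hD : D ∈ Y := hY (Finset.mem_insert_self _ _)
    refine Relation.ReflTransGen.head
      (b := (.mid b d a U ∅ (h D), fv b P (Y \ insert D P) g h)) ?_
      (Relation.ReflTransGen.head ?_ (ih ((Finset.subset_insert _ _).trans hY)))
    · refine ⟨_, Eps.dec b d a U ∅ (g D) (h D) (hok D hD), ?_⟩
      rw [stepErr_dec, forall_fin]
      refine ⟨?_, ?_⟩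
      · simp [fv, cnt_insert hDP, add_comm]
      · rintro ⟨b', S⟩ hne
        by_cases hb : b' = b
        · subst hb
          have : g D ≠ S := by rintro rfl; exact hne rfl
          simp [fv, cnt_insert hDP, this]
        · simp [fv, hb]
    · refine ⟨_, Eps.inc b d a U ∅ (h D), ?_⟩
      have h4 : Y \ P = insert D (Y \ insert D P) := by
        ext D'
        simp only [Finset.mem_sdiff, Finset.mem_insert]
        by_cases hh : D' = D
        · subst hh; simp [hD, hDP]
        · simp [hh]
      rw [stepErr_inc, forall_fin]
      refine ⟨?_, ?_⟩
      · simp only [fv, V_e, h4]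
        rw [cnt_insert (by simp)]
        simp [add_comm]
      · rintro ⟨b', S⟩
        simp only [fv, V_e]
        split_ifs
        · exact le_rfl
        · rw [h4, cnt_insert (by simp)]; omega

theorem block_start [Finite M.Q] {b d : Bool} {a : Option A} {U : Prof M.Q} {X : Finset ℕ}
    {g h : ℕ → Prof M.Q} {E : ℕ} (hE : E ∈ X) (hokE : Ok M a U true (g E d) U)
    (hok : ∀ D ∈ X, D ≠ E → Ok M a U false (g D d) (h D)) :
    Relation.ReflTransGen (Step M) (.start b d, fv b X ∅ g h)
      (.proc b d a U Set.univ, fv b ∅ (X.erase E) g h) := by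
  refine Relation.ReflTransGen.head (b := (.proc b d a U ∅, fv b (X.erase E) ∅ g h)) ?_ ?_
  · refine ⟨_, Eps.start b d a U (g E) hokE, ?_⟩
    rw [stepErr_dec, forall_fin]
    refine ⟨?_, ?_⟩
    · simp [fv, cnt_erase hE g (g E), add_comm]
    · rintro ⟨b', S⟩ hne
      by_cases hb : b' = b
      · subst hb
        have : g E ≠ S := by rintro rfl; exact hne rfl
        simp [fv, cnt_erase hE g S, this]
      · simp [fv, hb]
  · have := moves (b := b) (Y := X.erase E) (g := g) (h := h) (d := d) (a := a) (U := U)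
      (fun D hD => hok D (Finset.mem_of_mem_erase hD) (Finset.ne_of_mem_erase hD)) _ subset_rfl
    rw [Finset.sdiff_self] at this
    refine this.trans (ztests b d a U _ fun S => ?_)
    simp [fv]

theorem block_init [Finite M.Q] {a : Option A} {U : Prof M.Q} (hok : Ok M a U true {M.qI} U) :
    Relation.ReflTransGen (Step M) (.init, fun _ => 0)
      (.proc false false a U Set.univ, fun _ => 0) := by
  refine Relation.ReflTransGen.head ⟨_, Eps.init a U hok, ?_⟩ (ztests _ _ _ _ _ fun _ => rfl)
  rw [stepErr_dec]
  simp

/-! ### Trees -/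

theorem tree_choice {S : Type} (P : Node → S → Prop) (R : Node → S → S → S → Prop) (s0 : S)
    (h0 : P [] s0)
    (hs : ∀ n s, P n s → ∃ s0 s1, P (n ++ [false]) s0 ∧ P (n ++ [true]) s1 ∧ R n s s0 s1) :
    ∃ f : Node → S, f [] = s0 ∧
      ∀ n, P n (f n) ∧ R n (f n) (f (n ++ [false])) (f (n ++ [true])) := by
  have hs' : ∀ n s, ∃ c : Bool → S, P n s →
      P (n ++ [false]) (c false) ∧ P (n ++ [true]) (c true) ∧ R n s (c false) (c true) := by
    intro n s
    by_cases h : P n s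
    · obtain ⟨a, b, h1⟩ := hs n s h
      exact ⟨fun d => if d then b else a, fun _ => by simpa using h1⟩
    · exact ⟨fun _ => s0, fun h' => absurd h' h⟩
  choose c hc using hs'
  let F : List Bool → S := fun l => List.rec s0 (fun d l ih => c l.reverse ih d) l
  have hF : ∀ (d : Bool) (n : Node), F (n ++ [d]).reverse = c n (F n.reverse) d := by
    intro d n
    simp [F]
  have hP : ∀ n, P n (F n.reverse) := by
    intro n
    induction n using List.reverseRecOn with
    | nil => exact h0
    | append_singleton n d ih =>
      rw [hF]
      cases d
      · exact (hc _ _ ih).1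
      · exact (hc _ _ ih).2.1
  refine ⟨fun n => F n.reverse, rfl, fun n => ⟨hP n, ?_⟩⟩
  simp only [hF]
  exact (hc _ _ (hP n)).2.2

/-- The bank used at a node. -/
def par (n : Node) : Bool := n.length.bodd

/-- The direction of a node. -/
def sd (n : Node) : Bool := n.getLast?.getD false

theorem par_append (n : Node) (d : Bool) : par (n ++ [d]) = !par n := by simp [par]

theorem sd_append (n : Node) (d : Bool) : sd (n ++ [d]) = d := by simp [sd]

theorem mem_nodes_append {t : BTree A} {n : Node} {d : Bool} :
    n ++ [d] ∈ t.Nodes ↔ t.Nonleaf n := by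
  constructor
  · rintro (h | ⟨m, d', h, h'⟩)
    · simp at h
    · have := List.append_inj' h rfl
      rw [this.1]; exact h'
  · intro h
    exact Or.inr ⟨n, d, rfl, h⟩

theorem nonleaf_mem_nodes {t : BTree A} {n : Node} (h : t.Nonleaf n) : n ∈ t.Nodes := by
  induction n using List.reverseRecOn with
  | nil => exact Or.inl rfl
  | append_singleton n d ih => exact mem_nodes_append.2 (t.tree_cond n d h)

theorem run_block [Finite A] {t : BTree A} (ρ : (aut M).Run t) {n : Node} (hn : n ∈ t.Nodes)
    {x y : St A M.Q × Val (NC M)} (hx : (ρ.B n).head? = some x)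
    (hy : (ρ.B n).getLast? = some y) : Relation.ReflTransGen (Step M) x y := by
  have hne := ρ.nonempty n hn
  have h := List.relationReflTransGen_of_exists_isChain (ρ.B n) (ρ.block n hn) hne
  rw [List.head?_eq_some_head hne, Option.some.injEq] at hx
  rw [List.getLast?_eq_some_getLast hne, Option.some.injEq] at hy
  rw [hx, hy] at h
  exact h

theorem sound [Finite A] {t : BTree A} (ht : t ∈ (aut M).Lang) :
    ∃ τ ∈ M.Lfin, τ.toTree = t := by
  obtain ⟨tfin, ρ, acc⟩ := ht
  obtain ⟨f, hf0, hf⟩ := tree_choice (S := Finset ℕ × (ℕ → Prof M.Q))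
    (fun n s => n ∈ t.Nodes → ∃ x : St A M.Q × Val (NC M),
      (ρ.B n).head? = some x ∧ Inv M (n = []) (par n) (sd n) s.1 s.2 x.1 x.2)
    (fun n s s0 s1 => n ∈ t.Nodes →
      (∀ a, t.label n = some a → s1 = s0 ∧ ∃ E, (n = [] → E = 0) ∧ ∀ D ∈ s.1, ∀ q ∈ s.2 D (sd n),
        ∃ R : Bool → Bool → Set M.Q, (M.δ q a (decide (D = E))).Sat R ∧ ∀ d : Bool,
          (∀ r ∈ R d true, E ∈ s0.1 ∧ r ∈ s0.2 E d) ∧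
          (∀ r ∈ R d false, D ∈ s0.1 ∧ r ∈ s0.2 D d)) ∧
      (t.label n = none → ∀ D ∈ s.1, s.2 D (sd n) ⊆ M.F))
    ({0}, fun _ _ => {M.qI})
    (fun _ => ⟨(.init, fun _ => 0), ρ.init, rfl, rfl, rfl, rfl, rfl⟩)
    (by
      rintro n ⟨X, g⟩ hP
      by_cases hn : n ∈ t.Nodes
      swap
      · have hnl : ¬ t.Nonleaf n := fun h => hn (nonleaf_mem_nodes h)
        exact ⟨(X, g), (X, g), fun h => absurd (mem_nodes_append.1 h) hnl,
          fun h => absurd (mem_nodes_append.1 h) hnl, fun h => absurd h hn⟩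
      obtain ⟨x, hx, hinv⟩ := hP hn
      cases hl : t.label n with
      | none =>
        have hnl : ¬ t.Nonleaf n := by simp [BTree.Nonleaf, hl]
        refine ⟨(X, g), (X, g), fun h => absurd (mem_nodes_append.1 h) hnl,
          fun h => absurd (mem_nodes_append.1 h) hnl, fun _ => ⟨by simp, fun _ => ?_⟩⟩
        have hlast := List.getLast?_eq_some_getLast (ρ.nonempty n hn)
        obtain ⟨b, d, U, hq⟩ := acc n ⟨hn, hnl⟩ _ _ hlast
        have h1 := inv_steps hinv (run_block ρ hn hx hlast)
        have h1' : Inv M (n = []) (par n) (sd n) X g (.proc b d none U Set.univ)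
          ((ρ.B n).getLast (ρ.nonempty n hn)).2 := hq ▸ h1
        obtain ⟨-, -, E, T, -, h2, h3, -⟩ := inv_final h1'
        intro D hD
        by_cases hDE : D = E
        · subst hDE; exact h2 hD
        · exact h3 D hD hDE
      | some a =>
        obtain ⟨q, v, l, r0, r1, w0, w1, hlast, htr, hw0, hw1, hh0, hh1⟩ := ρ.step n a hl
        have h1 := inv_steps hinv (run_block ρ hn hx hlast)
        change Br M q a l r0 r1 at htr
        cases htr with
        | mk b d a U =>
        obtain ⟨rfl, rfl, E, T, hr, h2, h3, h4⟩ := inv_final h1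
        have hcnt : ∀ w : Val (NC M), StepErr (Instr.inc (e M (!par n, U))) v w →
            ∀ S, Cnt (insert E X) (Function.update T E U) S ≤ w (e M (!par n, S)) := by
          intro w hw S
          rw [stepErr_inc] at hw
          rw [cnt_erase (Finset.mem_insert_self E X), Finset.erase_insert_eq_erase,
            cnt_congr (h := T) (fun D hD => Function.update_of_ne (Finset.ne_of_mem_erase hD) _ _),
            Function.update_self]
          have h5 : Cnt (X.erase E) T S ≤ v (e M (!par n, S)) := h4 S
          by_cases hS : U = S
          · subst hS
            have h6 := hw.1
            rw [if_pos rfl]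
            omega
          · have h6 := hw.2 (e M (!par n, S))
            rw [if_neg hS]
            omega
        refine ⟨(insert E X, Function.update T E U), (insert E X, Function.update T E U),
          fun _ => ⟨_, hh0, ?_⟩, fun _ => ⟨_, hh1, ?_⟩, fun _ => ⟨?_, by simp⟩⟩
        · rw [par_append, sd_append]
          exact ⟨by simp, rfl, rfl, hcnt w0 hw0⟩
        · rw [par_append, sd_append]
          exact ⟨by simp, rfl, rfl, hcnt w1 hw1⟩
        · intro a' ha'
          obtain rfl : a = a' := by simpa using ha'
          refine ⟨rfl, E, hr, fun D hD q hq => ?_⟩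
          by_cases hDE : D = E
          · subst hDE
            obtain ⟨R, hR, hR'⟩ := h2 hD q hq
            refine ⟨R, by simpa using hR, fun d => ⟨fun r hr => ?_, fun r hr => ?_⟩⟩
            · simpa using (hR' d).1 hr
            · simpa using (hR' d).2 hr
          · obtain ⟨R, hR, hR'⟩ := h3 D hD hDE q hq
            refine ⟨R, by simpa [hDE] using hR, fun d => ⟨fun r hr => ?_, fun r hr => ?_⟩⟩
            · simpa using (hR' d).1 hr
            · simpa [hDE, hD] using (hR' d).2 hr)
  have hE : ∀ n, ∃ E, n ∈ t.Nodes → ∀ a, t.label n = some a →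
      f (n ++ [true]) = f (n ++ [false]) ∧ (n = [] → E = 0) ∧
      ∀ D ∈ (f n).1, ∀ q ∈ (f n).2 D (sd n),
        ∃ R : Bool → Bool → Set M.Q, (M.δ q a (decide (D = E))).Sat R ∧ ∀ d : Bool,
          (∀ r ∈ R d true, E ∈ (f (n ++ [false])).1 ∧ r ∈ (f (n ++ [false])).2 E d) ∧
          (∀ r ∈ R d false, D ∈ (f (n ++ [false])).1 ∧ r ∈ (f (n ++ [false])).2 D d) := by
    intro n
    by_cases hn : n ∈ t.Nodes
    · cases hl : t.label n with
      | none => exact ⟨0, by simp⟩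
      | some a =>
        obtain ⟨h1, E, h2⟩ := ((hf n).2 hn).1 a hl
        refine ⟨E, fun _ a' ha' => ?_⟩
        obtain rfl : a = a' := by simpa using ha'
        exact ⟨h1, h2⟩
    · exact ⟨0, fun h => absurd h hn⟩
  choose E hE using hE
  let τ : DataTree A :=
    { label := t.label
      dlabel := fun n => (t.label n).map fun _ => E n
      root_nonleaf := t.root_nonleaf
      domain_eq := fun n => by simp
      tree_cond := t.tree_cond }
  have hnodes : τ.Nodes = t.Nodes := rfl
  let ρM : M.Run τ :=
    { G := fun n => {x | n ∈ t.Nodes ∧ x.2 ∈ (f n).1 ∧ x.1 ∈ (f n).2 x.2 (sd n)}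
      finite := fun n => by
        have := M.fin
        refine Set.Finite.subset (s := Set.univ ×ˢ ((f n).1 : Set ℕ))
          (Set.finite_univ.prod (Finset.finite_toSet _)) ?_
        rintro ⟨q, D⟩ ⟨-, h, -⟩
        exact ⟨trivial, h⟩
      support := fun n hn => by
        rw [hnodes] at hn
        ext x
        simp [hn]
      init := by
        obtain ⟨a, ha⟩ := Option.isSome_iff_exists.1 t.root_nonleaf
        refine ⟨E [], by simp [τ, ha], Or.inl rfl, ?_⟩
        rw [(hE [] (Or.inl rfl) a ha).2.1 rfl, hf0]
        simp
      step := by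
        intro n a D ha hD q D' hq
        have ha' : t.label n = some a := ha
        have hD' : (t.label n).map (fun _ => E n) = some D := hD
        rw [ha'] at hD'
        obtain rfl : E n = D := by simpa using hD'
        obtain ⟨hn, hDX, hqD⟩ := hq
        obtain ⟨h1, -, h3⟩ := hE n hn a ha'
        obtain ⟨R, hR, hR'⟩ := h3 D' hDX q hqD
        have hnl : t.Nonleaf n := by simp [BTree.Nonleaf, ha']
        refine ⟨R, hR, fun d => ⟨fun r hr => ?_, fun r hr => ?_⟩⟩
        · have := (hR' d).1 r hr
          cases d
          · simpa [mem_nodes_append, hnl, sd_append] using this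
          · simpa [mem_nodes_append, hnl, sd_append, h1] using this
        · have := (hR' d).2 r hr
          cases d
          · simpa [mem_nodes_append, hnl, sd_append] using this
          · simpa [mem_nodes_append, hnl, sd_append, h1] using this }
  refine ⟨τ, ⟨tfin, ρM, ?_⟩, rfl⟩
  rintro n ⟨hn, hnl⟩ q D ⟨-, hD, hq⟩
  have hl : t.label n = none := by
    cases h : t.label n with
    | none => rfl
    | some a => exact absurd (by simp [DataTree.Nonleaf, τ, h]) hnl
  exact ((hf n).2 hn).2 hl D hD hq

/-- Threads with datum `D` at the two children of `n`. -/
def prof {τ : DataTree A} (ρ : M.Run τ) (n : Node) (D : ℕ) : Prof M.Q :=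
  fun d => {r | (r, D) ∈ ρ.G (n ++ [d])}

noncomputable def cfg {τ : DataTree A} (ρ : M.Run τ) (X : Finset ℕ) (n : Node) :
    St A M.Q × Val (NC M) :=
  if n = [] then (.init, fun _ => 0)
  else (.start (par n) (sd n), fv (par n) X ∅ (prof ρ n.dropLast) (prof ρ n))

theorem cfg_append {τ : DataTree A} (ρ : M.Run τ) (X : Finset ℕ) (n : Node) (d : Bool) :
    cfg ρ X (n ++ [d]) = (.start (!par n) d, fv (!par n) X ∅ (prof ρ n) (prof ρ (n ++ [d]))) := by
  simp [cfg, par_append, sd_append]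

theorem ok_of_run {τ : DataTree A} (ρ : M.Run τ) {n : Node} {a : A} {E : ℕ}
    (ha : τ.label n = some a) (hE : τ.dlabel n = some E) {D : ℕ} {S : Set M.Q}
    (hS : ∀ q ∈ S, (q, D) ∈ ρ.G n) :
    Ok M (some a) (prof ρ n E) (decide (D = E)) S (prof ρ n D) := by
  intro q hq
  obtain ⟨R, hR, h⟩ := ρ.step n a E ha hE q D (hS q hq)
  refine ⟨R, hR, fun d => ⟨fun r hr => ?_, fun r hr => ?_⟩⟩
  · have := (h d).1 r hr
    cases d <;> simpa [prof] using this
  · have := (h d).2 r hr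
    cases d <;> simpa [prof] using this

theorem complete [Finite A] {τ : DataTree A} (hτ : τ ∈ M.Lfin) : τ.toTree ∈ (aut M).Lang := by
  have := M.fin
  obtain ⟨hfin, ρ, hfinal⟩ := hτ
  refine ⟨hfin, ?_⟩
  obtain ⟨X, hX⟩ : ∃ X : Finset ℕ, ∀ n D, τ.dlabel n = some D → D ∈ X := by
    refine ⟨(Set.Finite.image (fun n => (τ.dlabel n).getD 0) hfin).toFinset, fun n D h => ?_⟩
    rw [Set.Finite.mem_toFinset]
    exact ⟨n, (τ.domain_eq n).1 (by simp [h]), by simp [h]⟩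
  have hblk : ∀ n, ∃ y : St A M.Q × Val (NC M), n ∈ τ.toTree.Nodes →
      Relation.ReflTransGen (Step M) (cfg ρ X n) y ∧
      (∀ a, τ.label n = some a → ∃ d U, y.1 = .proc (par n) d (some a) U Set.univ ∧
        ∀ d', StepErr (Instr.inc (e M (!par n, U))) y.2 (cfg ρ X (n ++ [d'])).2) ∧
      (τ.label n = none → ∃ b d U, y.1 = .proc b d none U Set.univ) := by
    intro n
    cases hl : τ.label n with
    | none =>
      rcases List.eq_nil_or_concat' n with rfl | ⟨m, d, rfl⟩
      · have := τ.root_nonleaf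
        simp [hl] at this
      obtain ⟨E, hE, -⟩ := ρ.init
      refine ⟨(.proc (!par m) d none (fun _ => ∅) Set.univ,
        fv (!par m) ∅ (X.erase E) (prof ρ m) (prof ρ (m ++ [d]))),
        fun hn => ⟨?_, by simp, fun _ => ⟨_, _, _, rfl⟩⟩⟩
      rw [cfg_append]
      have hleaf : τ.Leaf (m ++ [d]) := ⟨hn, by simp [DataTree.Nonleaf, hl]⟩
      exact block_start (hX _ _ hE) (fun q hq => hfinal _ hleaf q E hq)
        (fun D _ _ q hq => hfinal _ hleaf q D hq)
    | some a =>
      obtain ⟨E, hE⟩ := Option.isSome_iff_exists.1 ((τ.domain_eq n).2 (by simp [hl]))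
      have hEX := hX _ _ hE
      rcases List.eq_nil_or_concat' n with rfl | ⟨m, d, rfl⟩
      · refine ⟨(.proc false false (some a) (prof ρ [] E) Set.univ, fun _ => 0),
          fun _ => ⟨?_, ?_, by simp⟩⟩
        · have : cfg ρ X [] = (.init, fun _ => 0) := by simp [cfg]
          rw [this]
          apply block_init
          obtain ⟨D, hD, hq⟩ := ρ.init
          obtain rfl : D = E := by simpa [hE] using hD.symm
          have := ok_of_run ρ hl hE (D := D) (S := {M.qI}) (by rintro q rfl; exact hq)
          simpa using this
        · intro a' ha'
          obtain rfl : a = a' := by simpa using ha'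
          refine ⟨_, _, rfl, fun d' => ?_⟩
          rw [cfg_append, stepErr_inc]
          refine ⟨?_, by simp⟩
          simp [fv, cnt_erase hEX (prof ρ []) (prof ρ [] E)]
      · refine ⟨(.proc (!par m) d (some a) (prof ρ (m ++ [d]) E) Set.univ,
          fv (!par m) ∅ (X.erase E) (prof ρ m) (prof ρ (m ++ [d]))), fun _ => ⟨?_, ?_, by simp⟩⟩
        · rw [cfg_append]
          refine block_start hEX ?_ ?_
          · have := ok_of_run ρ hl hE (D := E) (S := prof ρ m E d) (fun q hq => hq)
            simpa using this
          · intro D hD hDE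
            have := ok_of_run ρ hl hE (D := D) (S := prof ρ m D d) (fun q hq => hq)
            simpa [hDE] using this
        · intro a' ha'
          obtain rfl : a = a' := by simpa using ha'
          rw [par_append]
          refine ⟨_, _, rfl, fun d' => ?_⟩
          rw [cfg_append, stepErr_inc, forall_fin, par_append]
          refine ⟨?_, ?_⟩
          · simp [fv, cnt_erase hEX (prof ρ (m ++ [d])) (prof ρ (m ++ [d]) E), add_comm]
          · rintro ⟨b, S⟩
            cases b <;> cases hp : par m <;>
              simp [fv, cnt_mono _ (Finset.erase_subset E X) S]
  choose y hy using hblk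
  have hL : ∀ n, ∃ L : List (St A M.Q × Val (NC M)), n ∈ τ.toTree.Nodes →
      L ≠ [] ∧ List.IsChain (Step M) L ∧ L.head? = some (cfg ρ X n) ∧
        L.getLast? = some (y n) := by
    intro n
    by_cases hn : n ∈ τ.toTree.Nodes
    · obtain ⟨L, hL, h1, h2, h3⟩ :=
        List.exists_isChain_ne_nil_of_relationReflTransGen (hy n hn).1
      exact ⟨L, fun _ => ⟨hL, h1, by rw [List.head?_eq_some_head hL, h2],
        by rw [List.getLast?_eq_some_getLast hL, h3]⟩⟩
    · exact ⟨[], fun h => absurd h hn⟩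
  choose B hB using hL
  let ρC : (aut M).Run τ.toTree :=
    { B := B
      nonempty := fun n hn => (hB n hn).1
      block := fun n hn => (hB n hn).2.1
      init := (hB [] (Or.inl rfl)).2.2.1
      step := by
        intro n a ha
        have hnl : τ.toTree.Nonleaf n := by simp [BTree.Nonleaf, ha]
        have hn := nonleaf_mem_nodes hnl
        obtain ⟨d, U, h1, h2⟩ := (hy n hn).2.1 a ha
        refine ⟨(y n).1, (y n).2, Instr.inc (e M (!par n, U)), .start (!par n) false,
          .start (!par n) true, _, _, (hB n hn).2.2.2, ?_, h2 false, h2 true, ?_, ?_⟩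
        · change Br M _ _ _ _ _
          rw [h1]
          exact Br.mk _ _ _ _
        · rw [(hB _ (mem_nodes_append.2 hnl)).2.2.1, cfg_append]
        · rw [(hB _ (mem_nodes_append.2 hnl)).2.2.1, cfg_append] }
  refine ⟨ρC, ?_⟩
  rintro n ⟨hn, hnl⟩ q v hqv
  have hl : τ.label n = none := by
    cases h : τ.label n with
    | none => rfl
    | some a => exact absurd (by simp [BTree.Nonleaf, DataTree.toTree, h]) hnl
  have h1 : (B n).getLast? = some (q, v) := hqv
  rw [(hB n hn).2.2.2] at h1
  obtain ⟨b, d, U, h2⟩ := (hy n hn).2.2 hl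
  refine ⟨b, d, U, ?_⟩
  have h3 : y n = (q, v) := by simpa using h1
  rw [h3] at h2
  exact h2

end AtraItca
/-- For every ATRA₁ `𝒜` there is an ITCA `𝒞` with
`L(𝒞) = {tree(τ) : τ ∈ L^fin(𝒜)}`. -/
theorem atra_to_itca {A : Type} [Fintype A] (M : ATRA A) :
    ∃ C : ITCA A, C.Lang = {t : BTree A | ∃ τ ∈ M.Lfin, τ.toTree = t} := by
  refine ⟨AtraItca.aut M, ?_⟩
  ext t
  constructor
  · exact AtraItca.sound
  · rintro ⟨τ, hτ, rfl⟩
    exact AtraItca.complete hτ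
end

section
/- Let 𝒜₁ = ⟨Σ, Q₁, q_I¹, F₁, δ₁⟩ and 𝒜₂ = ⟨Σ, Q₂, q_I², F₂, δ₂⟩ be ATRA₁ with Q₁ and Q₂ disjoint and q_I^∩ ∉ Q₁ ∪ Q₂, and let 𝒜∩ = ⟨Σ, {q_I^∩} ∪ Q₁ ∪ Q₂, q_I^∩, F₁ ∪ (Q₂ ∖ F₂), δ∩⟩ be the intersection of 𝒜₁ and the dual 𝒜̄₂, where δ∩(q_I^∩, a, p) = δ₁(q_I¹, a, p) ∧ (dual of δ₂(q_I², a, p)), δ∩(q, a, p) = δ₁(q, a, p) for q ∈ Q₁, and δ∩(q, a, p) = dual of δ₂(q, a, p) for q ∈ Q₂ (the dual of a formula swaps ⊤ with ⊥ and ∧ with ∨). Then a data tree τ with alphabet Σ is safety-accepted by 𝒜₁ and co-safety-accepted by 𝒜̄₂ if and only if 𝒜∩ has a run on τ which is both final and Q₂-finite, where Q₂-finite means there exists l such that the configuration at each node of length at least l contains no thread whose state is in Q₂. -/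
/-- The intersection of `𝒜₁` with the dual of `𝒜₂`: a fresh initial state whose
transition formulae are conjunctions of those of the two initial states, next to
disjoint copies of `𝒜₁` and of the dual of `𝒜₂`; the final states are those of
`𝒜₁` together with the non-final states of `𝒜₂`. -/
def ATRA.inter {A : Type} (M1 M2 : ATRA A) : ATRA A where
  Q := Unit ⊕ (M1.Q ⊕ M2.Q)
  fin := by
    haveI := M1.fin; haveI := M2.fin
    infer_instance
  qI := Sum.inl ()
  F := {x | (∃ q ∈ M1.F, x = Sum.inr (Sum.inl q)) ∨ (∃ q ∉ M2.F, x = Sum.inr (Sum.inr q))}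
  δ x a p :=
    match x with
    | Sum.inl _ =>
        .and ((M1.δ M1.qI a p).map (fun q => Sum.inr (Sum.inl q)))
             (((M2.δ M2.qI a p).dual).map (fun q => Sum.inr (Sum.inr q)))
    | Sum.inr (Sum.inl q) => (M1.δ q a p).map (fun q => Sum.inr (Sum.inl q))
    | Sum.inr (Sum.inr q) => ((M2.δ q a p).dual).map (fun q => Sum.inr (Sum.inr q))

theorem PosBool.sat_map {Q Q' : Type} (f : Q → Q') (R : Bool → Bool → Set Q')
    (φ : PosBool Q) : (φ.map f).Sat R ↔ φ.Sat (fun d u => f ⁻¹' R d u) := by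
  induction φ with
  | atom q d u => exact Iff.rfl
  | tt => exact Iff.rfl
  | ff => exact Iff.rfl
  | and φ ψ h1 h2 => exact and_congr h1 h2
  | or φ ψ h1 h2 => exact or_congr h1 h2

theorem PosBool.sat_mono {Q : Type} {R S : Bool → Bool → Set Q}
    (h : ∀ d u, R d u ⊆ S d u) (φ : PosBool Q) : φ.Sat R → φ.Sat S := by
  induction φ with
  | atom q d u => exact fun hq => h d u hq
  | tt => exact id
  | ff => exact id
  | and φ ψ h1 h2 => exact And.imp h1 h2
  | or φ ψ h1 h2 => exact Or.imp h1 h2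

/-- The largest quadruple allowed by successor configurations. -/
def bigR {Q : Type} (E D : ℕ) (H0 H1 : Set (Q × ℕ)) (d u : Bool) : Set Q :=
  {r | (r, if u then E else D) ∈ (if d then H1 else H0)}

theorem ATRA.trans_iff {A : Type} (M : ATRA A) (a : A) (E : ℕ) (G H0 H1 : Set (M.Q × ℕ)) :
    M.Trans a E G H0 H1 ↔
      ∀ q D, (q, D) ∈ G → (M.δ q a (decide (D = E))).Sat (bigR E D H0 H1) := by
  constructor
  · intro h q D hq
    obtain ⟨R, hR, hd⟩ := h q D hq
    refine PosBool.sat_mono ?_ _ hR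
    intro d u r hr
    cases u
    · exact (hd d).2 r hr
    · exact (hd d).1 r hr
  · intro h q D hq
    exact ⟨_, h q D hq, fun d => ⟨fun r hr => hr, fun r hr => hr⟩⟩

/-- Extraction of a component run from a run of the intersection. -/
theorem extract_run {A : Type} {M : ATRA A} {N : ATRA A} {τ : DataTree A} (ρ : N.Run τ)
    (f : M.Q → N.Q) (hf : Function.Injective f)
    (hδ : ∀ q a p, N.δ (f q) a p = (M.δ q a p).map f)
    (hI : ∀ a p R, (N.δ N.qI a p).Sat R → ((M.δ M.qI a p).map f).Sat R)
    (hF : ∀ q, f q ∈ N.F → q ∈ M.F) (hfin : ρ.Final) :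
    ∃ ρ' : M.Run τ, ρ'.Final ∧ ∀ n, n ≠ [] → ∀ q D, (q, D) ∈ ρ'.G n → (f q, D) ∈ ρ.G n := by
  obtain ⟨D0, hD0, h0⟩ := ρ.init
  let G : Node → Set (M.Q × ℕ) := fun n =>
    {x | (f x.1, x.2) ∈ ρ.G n ∨ (n = [] ∧ x = (M.qI, D0))}
  refine ⟨⟨G, ?_, ?_, ⟨D0, hD0, Or.inr ⟨rfl, rfl⟩⟩, ?_⟩, ?_, ?_⟩
  · intro n
    have h1 : (Prod.map f id ⁻¹' ρ.G n : Set (M.Q × ℕ)).Finite :=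
      (ρ.finite n).preimage (hf.prodMap Function.injective_id).injOn
    refine (h1.union (Set.finite_singleton (M.qI, D0))).subset ?_
    rintro x (hx | ⟨_, hx⟩)
    · exact Or.inl hx
    · exact Or.inr hx
  · intro n hn
    refine Set.eq_empty_of_forall_notMem ?_
    rintro x (hx | ⟨h, _⟩)
    · rw [ρ.support n hn] at hx
      exact hx
    · exact hn (Or.inl h)
  · intro n a E ha hE
    have hs := (ATRA.trans_iff _ _ _ _ _ _).1 (ρ.step n a E ha hE)
    rw [ATRA.trans_iff]
    have key : ∀ q D, ((M.δ q a (decide (D = E))).map f).Sat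
        (bigR E D (ρ.G (n ++ [false])) (ρ.G (n ++ [true]))) →
        (M.δ q a (decide (D = E))).Sat (bigR E D (G (n ++ [false])) (G (n ++ [true]))) := by
      intro q D h
      rw [PosBool.sat_map] at h
      refine PosBool.sat_mono ?_ _ h
      intro d u r hr
      cases d
      · exact Or.inl hr
      · exact Or.inl hr
    rintro q D (hq | ⟨hn, hq⟩)
    · apply key
      have := hs _ _ hq
      rwa [hδ] at this
    · subst hn
      cases hq
      apply key
      exact hI _ _ _ (hs _ _ h0)
  · rintro n hn q D (hq | ⟨h, _⟩)
    · exact hF q (hfin n hn _ _ hq)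
    · subst h
      exact absurd τ.root_nonleaf hn.2
  · rintro n hn q D (hq | ⟨h, _⟩)
    · exact hq
    · exact absurd h hn

/-- A data tree is safety-accepted by `𝒜₁` and
co-safety-accepted by `𝒜̄₂` iff the intersection automaton has a run on it which
is final and `Q₂`-finite. -/
theorem inter_run_characterisation {A : Type} [Fintype A] (M1 M2 : ATRA A)
    (τ : DataTree A) :
    (τ ∈ M1.Lsaf ∧ τ ∈ M2.dual.Lcos) ↔
      ∃ ρ : (M1.inter M2).Run τ, ρ.Final ∧
        ∃ l : ℕ, ∀ n : Node, l ≤ n.length →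
          ∀ x D, (x, D) ∈ ρ.G n → ∀ q2 : M2.Q, x ≠ Sum.inr (Sum.inr q2) := by
  constructor
  · rintro ⟨⟨ρ1, hf1⟩, ρ2, hf2, l, hl⟩
    obtain ⟨D1, hD1, h1⟩ := ρ1.init
    obtain ⟨D2, hD2, h2⟩ := ρ2.init
    have h12 : D2 = D1 := Option.some.inj (hD2.symm.trans hD1)
    subst h12
    let f1 : M1.Q → (M1.inter M2).Q := fun q => Sum.inr (Sum.inl q)
    let f2 : M2.Q → (M1.inter M2).Q := fun q => Sum.inr (Sum.inr q)
    let G : Node → Set ((M1.inter M2).Q × ℕ) := fun n =>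
      (Prod.map f1 id '' ρ1.G n ∪ Prod.map f2 id '' ρ2.G n) ∪
        {x | n = [] ∧ x = ((M1.inter M2).qI, D2)}
    have m1 : ∀ n q D, (q, D) ∈ ρ1.G n → (f1 q, D) ∈ G n :=
      fun n q D h => Or.inl (Or.inl ⟨(q, D), h, rfl⟩)
    have m2 : ∀ n q D, (q, D) ∈ ρ2.G n → (f2 q, D) ∈ G n :=
      fun n q D h => Or.inl (Or.inr ⟨(q, D), h, rfl⟩)
    refine ⟨⟨G, ?_, ?_, ⟨D2, hD1, Or.inr ⟨rfl, rfl⟩⟩, ?_⟩, ?_, l, ?_⟩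
    · intro n
      refine (((ρ1.finite n).image _).union ((ρ2.finite n).image _)).union
        ((Set.finite_singleton ((M1.inter M2).qI, D2)).subset ?_)
      rintro x ⟨_, hx⟩
      exact hx
    · intro n hn
      refine Set.eq_empty_of_forall_notMem ?_
      rintro x ((⟨y, hy, _⟩ | ⟨y, hy, _⟩) | ⟨h, _⟩)
      · rw [ρ1.support n hn] at hy
        exact hy
      · rw [ρ2.support n hn] at hy
        exact hy
      · exact hn (Or.inl h)
    · intro n a E ha hE
      have hs1 := (ATRA.trans_iff _ _ _ _ _ _).1 (ρ1.step n a E ha hE)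
      have hs2 := (ATRA.trans_iff _ _ _ _ _ _).1 (ρ2.step n a E ha hE)
      rw [ATRA.trans_iff]
      have k1 : ∀ q D, (q, D) ∈ ρ1.G n → ((M1.δ q a (decide (D = E))).map f1).Sat
          (bigR E D (G (n ++ [false])) (G (n ++ [true]))) := by
        intro q D h
        rw [PosBool.sat_map]
        refine PosBool.sat_mono ?_ _ (hs1 q D h)
        intro d u r hr
        cases d
        · exact m1 _ _ _ hr
        · exact m1 _ _ _ hr
      have k2 : ∀ (q : M2.Q) D, (q, D) ∈ ρ2.G n →
          (((M2.δ q a (decide (D = E))).dual).map f2).Sat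
          (bigR E D (G (n ++ [false])) (G (n ++ [true]))) := by
        intro q D h
        rw [PosBool.sat_map]
        refine PosBool.sat_mono ?_ _ (hs2 q D h)
        intro d u r hr
        cases d
        · exact m2 _ _ _ hr
        · exact m2 _ _ _ hr
      rintro q D ((⟨⟨p, D'⟩, hp, he⟩ | ⟨⟨p, D'⟩, hp, he⟩) | ⟨hn, he⟩)
      · cases he
        exact k1 p D' hp
      · cases he
        exact k2 p D' hp
      · subst hn
        cases he
        exact ⟨k1 _ _ h1, k2 _ _ h2⟩
    · rintro n hn q D ((⟨⟨p, D'⟩, hp, he⟩ | ⟨⟨p, D'⟩, hp, he⟩) | ⟨h, _⟩)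
      · cases he
        exact Or.inl ⟨p, hf1 n hn p D' hp, rfl⟩
      · cases he
        exact Or.inr ⟨p, hf2 n hn p D' hp, rfl⟩
      · subst h
        exact absurd τ.root_nonleaf hn.2
    · rintro n hn x D ((⟨⟨p, D'⟩, hp, he⟩ | ⟨⟨p, D'⟩, hp, he⟩) | ⟨_, he⟩) q2 hx
      · subst hx
        cases he
      · rw [hl n hn] at hp
        exact hp
      · subst hx
        cases he
  · rintro ⟨ρ, hfin, l, hl⟩
    constructor
    · obtain ⟨ρ', h', _⟩ := extract_run (M := M1) ρ (fun q => Sum.inr (Sum.inl q))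
        (Sum.inr_injective.comp Sum.inl_injective) (fun _ _ _ => rfl)
        (fun _ _ _ h => h.1)
        (by
          rintro q (⟨p, hp, he⟩ | ⟨p, hp, he⟩)
          · cases he
            exact hp
          · cases he) hfin
      exact ⟨ρ', h'⟩
    · obtain ⟨ρ', h', hG⟩ := extract_run (M := M2.dual) ρ (fun q => Sum.inr (Sum.inr q))
        (Sum.inr_injective.comp Sum.inr_injective) (fun _ _ _ => rfl)
        (fun _ _ _ h => h.2)
        (by
          rintro q (⟨p, hp, he⟩ | ⟨p, hp, he⟩)
          · cases he
          · cases he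
            exact hp) hfin
      refine ⟨ρ', h', max l 1, ?_⟩
      intro n hn
      refine Set.eq_empty_of_forall_notMem ?_
      rintro ⟨q, D⟩ hq
      have hne : n ≠ [] := by
        rintro rfl
        simp at hn
      exact hl n (le_trans (le_max_left _ _) hn) _ _ (hG n hne q D hq) q rfl
end
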